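/- arXiv:1408.0979 — 3 statements merged into one kernel-verified Lean document; each statement's English description precedes it below -/
import Mathlib

section
/- In a DMC, if s' is a successor of the global state s, then there exists exactly one maximal step u at s such that s' is the u-successor of s. -/
/-- A probabilistic asynchronous system over agents `{1,…,n}` with local state
spaces `S i`, actions `A`, locations `loc`, enabling sets `en` and probabilistic
transition functions `prob`. -/
structure PAS (n : ℕ) (A : Type) (S : Fin n → Type) [Fintype A] [∀ i, Fintype (S i)] where
  loc : A → Finset (Fin n)
  loc_nonempty : ∀ a, (loc a).Nonempty
  en : ∀ a : A, Set (∀ i : {j // j ∈ loc a}, S i.1)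
  prob : ∀ a : A, (∀ i : {j // j ∈ loc a}, S i.1) → (∀ i : {j // j ∈ loc a}, S i.1) → ℝ
  prob_nonneg : ∀ a v v', v ∈ en a → 0 ≤ prob a v v'
  prob_sum : ∀ a v, v ∈ en a →
    ∑ v' : (∀ i : {j // j ∈ loc a}, S i.1), prob a v v' = 1

namespace PAS

variable {n : ℕ} {A : Type} {S : Fin n → Type} [Fintype A] [∀ i, Fintype (S i)]

/-- Projection of a global state to an `a`-state. -/
def projA (P : PAS n A S) (a : A) (s : ∀ i, S i) : ∀ i : {j // j ∈ P.loc a}, S i.1 :=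
  fun i => s i.1

/-- Action `a` is enabled at global state `s`. -/
def enabledA (P : PAS n A S) (a : A) (s : ∀ i, S i) : Prop := P.projA a s ∈ P.en a

/-- An event `(v, a, v')` with `v ∈ en a` and `π^a(v)(v') > 0`. -/
structure Event (P : PAS n A S) where
  act : A
  src : ∀ i : {j // j ∈ P.loc act}, S i.1
  tgt : ∀ i : {j // j ∈ P.loc act}, S i.1
  src_en : src ∈ P.en act
  prob_pos : 0 < P.prob act src tgt

/-- The probability attached to an event. -/
def Event.p {P : PAS n A S} (e : P.Event) : ℝ := P.prob e.act e.src e.tgt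

/-- Event `e` is enabled at global state `s`. -/
def Event.enabled {P : PAS n A S} (e : P.Event) (s : ∀ i, S i) : Prop :=
  P.projA e.act s = e.src

/-- The transition relation `s →_e s'`. -/
def Event.trans {P : PAS n A S} (e : P.Event) (s s' : ∀ i, S i) : Prop :=
  e.enabled s ∧ (∀ i : {j // j ∈ P.loc e.act}, s' i.1 = e.tgt i) ∧
    ∀ j, j ∉ P.loc e.act → s' j = s j

/-- Events are independent iff their locations are disjoint. -/
def indep {P : PAS n A S} (e e' : P.Event) : Prop :=
  P.loc e.act ∩ P.loc e'.act = ∅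

/-- `u` is a step at `s`: a nonempty finite set of events, each enabled at `s`,
pairwise independent. -/
def isStep (P : PAS n A S) (u : Set P.Event) (s : ∀ i, S i) : Prop :=
  u.Finite ∧ u.Nonempty ∧ (∀ e ∈ u, Event.enabled e s) ∧
    ∀ e ∈ u, ∀ e' ∈ u, e ≠ e' → indep e e'

/-- `u` is a maximal step at `s`. -/
def isMaxStep (P : PAS n A S) (u : Set P.Event) (s : ∀ i, S i) : Prop :=
  P.isStep u s ∧ ∀ e ∉ u, ¬ P.isStep (insert e u) s

/-- `loc(u) = ⋃_{e ∈ u} loc(e)`. -/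
def locU (P : PAS n A S) (u : Set P.Event) : Set (Fin n) :=
  ⋃ e ∈ u, (P.loc e.act : Set (Fin n))

/-- `s'` is a `u`-successor of `s`. -/
def uSucc (P : PAS n A S) (u : Set P.Event) (s s' : ∀ i, S i) : Prop :=
  (∀ e ∈ u, ∀ i : {j // j ∈ P.loc (Event.act e)}, s' i.1 = e.tgt i) ∧
    ∀ j, j ∉ P.locU u → s' j = s j

/-- `s'` is a successor of `s`. -/
def isSuccessor (P : PAS n A S) (s s' : ∀ i, S i) : Prop :=
  ∃ u, P.isMaxStep u s ∧ P.uSucc u s s'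

/-- `s` is a deadlock iff no event is enabled at `s`. -/
def isDeadlock (P : PAS n A S) (s : ∀ i, S i) : Prop :=
  ¬ ∃ e : P.Event, e.enabled s

/-- `act(x)` for a local state `x ∈ S i`. -/
def actSet (P : PAS n A S) (i : Fin n) (x : S i) : Set A :=
  {a | ∃ h : i ∈ P.loc a, ∃ v ∈ P.en a, v ⟨i, h⟩ = x}

/-- A DMC: for every agent `i` and local state `x`, `|act(x)| = 1`. -/
def isDMC (P : PAS n A S) : Prop :=
  ∀ (i : Fin n) (x : S i), ∃! a : A, a ∈ P.actSet i x

/-- An event is determined by its action and the global states before and after it. -/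
theorem Event.eq_of_act_eq {P : PAS n A S} {s s' : ∀ i, S i} {e f : P.Event}
    (he : e.enabled s) (hf : f.enabled s) (he' : P.projA e.act s' = e.tgt)
    (hf' : P.projA f.act s' = f.tgt) (h : e.act = f.act) : e = f := by
  obtain ⟨a, v, v', _, _⟩ := e
  obtain ⟨b, w, w', _, _⟩ := f
  dsimp only [Event.enabled] at *
  subst h he hf he' hf'
  rfl

/-- In a DMC, enabled events sharing an agent have the same action. -/
theorem isDMC.act_eq {P : PAS n A S} (hP : P.isDMC) {s : ∀ i, S i} {e f : P.Event}
    (he : e.enabled s) (hf : f.enabled s) (h : ¬ indep e f) : e.act = f.act := by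
  obtain ⟨i, hi⟩ := Finset.nonempty_iff_ne_empty.mpr h
  obtain ⟨hie, hif⟩ := Finset.mem_inter.mp hi
  exact (hP i (s i)).unique ⟨hie, e.src, e.src_en, (congrFun he ⟨i, hie⟩).symm⟩
    ⟨hif, f.src, f.src_en, (congrFun hf ⟨i, hif⟩).symm⟩

/-- An enabled event outside a maximal step conflicts with some event of that step. -/
theorem isMaxStep.exists_not_indep {P : PAS n A S} {s : ∀ i, S i} {u : Set P.Event}
    (hu : P.isMaxStep u s) {e : P.Event} (he : e.enabled s) (heu : e ∉ u) :
    ∃ f ∈ u, ¬ indep e f := by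
  by_contra! hind
  obtain ⟨⟨hfin, -, hen, hpair⟩, hmax⟩ := hu
  refine hmax e heu ⟨hfin.insert e, Set.insert_nonempty e u, ?_, ?_⟩
  · rintro f (rfl | hf)
    exacts [he, hen f hf]
  · rintro f (rfl | hf) g (rfl | hg) hfg
    · exact absurd rfl hfg
    · exact hind g hg
    · exact (Finset.inter_comm _ _).trans (hind f hf)
    · exact hpair f hf g hg hfg

/-- In a DMC, a step is contained in every maximal step leading to the same global state. -/
theorem isDMC.step_subset {P : PAS n A S} (hP : P.isDMC) {s s' : ∀ i, S i}
    {u w : Set P.Event} (hw : P.isStep w s) (hws : P.uSucc w s s')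
    (hu : P.isMaxStep u s) (hus : P.uSucc u s s') : w ⊆ u := by
  intro e hew
  by_contra heu
  have he := hw.2.2.1 e hew
  obtain ⟨f, hfu, hef⟩ := hu.exists_not_indep he heu
  have hf := hu.1.2.2.1 f hfu
  have hEq : e = f := Event.eq_of_act_eq he hf (funext (hws.1 e hew)) (funext (hus.1 f hfu))
    (hP.act_eq he hf hef)
  exact heu (hEq ▸ hfu)

theorem stmt5 (P : PAS n A S) (hP : P.isDMC) (s s' : ∀ i, S i)
    (h : P.isSuccessor s s') :
    ∃! u : Set P.Event, P.isMaxStep u s ∧ P.uSucc u s s' := by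
  obtain ⟨u, hu, hus⟩ := h
  refine ⟨u, ⟨hu, hus⟩, fun w ⟨hw, hws⟩ => ?_⟩
  exact (hP.step_subset hw.1 hws hu hus).antisymm (hP.step_subset hu.1 hus hw hws)

end PAS
end

section
/- In a DMC, if u and u' are both maximal steps at the global state s, then loc(u) = loc(u') and |u| = |u'|. -/
namespace PAS

variable {n : ℕ} {A : Type} {S : Fin n → Type} [Fintype A] [∀ i, Fintype (S i)]

/-- In a DMC, two events enabled at `s` that share an agent have the same action. -/
theorem isDMC.act_eq_of_mem_loc {P : PAS n A S} (hP : P.isDMC) {s : ∀ i, S i}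
    {e e' : P.Event} (he : e.enabled s) (he' : e'.enabled s) {i : Fin n}
    (hi : i ∈ P.loc e.act) (hi' : i ∈ P.loc e'.act) : e.act = e'.act :=
  (hP i (s i)).unique ⟨hi, e.src, e.src_en, (congrFun he ⟨i, hi⟩).symm⟩
    ⟨hi', e'.src, e'.src_en, (congrFun he' ⟨i, hi'⟩).symm⟩

/-- Distinct events of a step have distinct actions. -/
theorem isStep.injOn_act {P : PAS n A S} {u : Set P.Event} {s : ∀ i, S i}
    (hu : P.isStep u s) : Set.InjOn Event.act u := by
  intro e he e' he' h
  by_contra hne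
  have hind : P.loc e.act ∩ P.loc e'.act = ∅ := hu.2.2.2 e he e' he' hne
  rw [← h, Finset.inter_self] at hind
  exact (P.loc_nonempty e.act).ne_empty hind

/-- In a DMC, a maximal step at `s` contains an event for the action of every event
enabled at `s`. -/
theorem isMaxStep.act_mem_image {P : PAS n A S} (hP : P.isDMC) {u : Set P.Event}
    {s : ∀ i, S i} (hu : P.isMaxStep u s) {e : P.Event} (he : e.enabled s) :
    e.act ∈ Event.act '' u := by
  by_contra hmem
  have hind : ∀ f ∈ u, P.loc e.act ∩ P.loc f.act = ∅ := by
    intro f hf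
    by_contra hne
    obtain ⟨i, hi⟩ := Finset.nonempty_iff_ne_empty.mpr hne
    rw [Finset.mem_inter] at hi
    exact hmem ⟨f, hf, hP.act_eq_of_mem_loc (hu.1.2.2.1 f hf) he hi.2 hi.1⟩
  obtain ⟨⟨hfin, -, hen, hpair⟩, hmax⟩ := hu
  refine hmax e (fun h => hmem ⟨e, h, rfl⟩) ⟨hfin.insert e, Set.insert_nonempty e u, ?_, ?_⟩
  · rintro f (rfl | hf)
    exacts [he, hen f hf]
  · rintro f (rfl | hf) g (rfl | hg) hne
    · exact absurd rfl hne
    · exact hind g hg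
    · exact (Finset.inter_comm _ _).trans (hind f hf)
    · exact hpair f hf g hg hne

/-- In a DMC, all maximal steps at `s` have the same actions. -/
theorem isMaxStep.image_act_eq {P : PAS n A S} (hP : P.isDMC) {u u' : Set P.Event}
    {s : ∀ i, S i} (hu : P.isMaxStep u s) (hu' : P.isMaxStep u' s) :
    Event.act '' u = Event.act '' u' := by
  apply Set.Subset.antisymm
  · rintro _ ⟨e, he, rfl⟩
    exact hu'.act_mem_image hP (hu.1.2.2.1 e he)
  · rintro _ ⟨e, he, rfl⟩
    exact hu.act_mem_image hP (hu'.1.2.2.1 e he)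

/-- The locations of `u` depend only on its actions. -/
theorem locU_eq_biUnion_image_act (P : PAS n A S) (u : Set P.Event) :
    P.locU u = ⋃ a ∈ Event.act '' u, (P.loc a : Set (Fin n)) :=
  (Set.biUnion_image (f := Event.act) (g := fun a => (P.loc a : Set (Fin n)))).symm

theorem stmt6 (P : PAS n A S) (hP : P.isDMC) (u u' : Set P.Event) (s : ∀ i, S i)
    (hu : P.isMaxStep u s) (hu' : P.isMaxStep u' s) :
    P.locU u = P.locU u' ∧ u.ncard = u'.ncard := by
  have himage := hu.image_act_eq hP hu'
  constructor
  · rw [locU_eq_biUnion_image_act, locU_eq_biUnion_image_act, himage]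
  · rw [← hu.1.injOn_act.ncard_image, ← hu'.1.injOn_act.ncard_image, himage]

end PAS
end

section
/- In a DMC, the matrix M is a stochastic matrix: for every global state s, the sum over all global states s' of M(s, s') equals 1. Hence M is the transition matrix of a finite-state Markov chain on the set of global states. -/
namespace PAS

variable {n : ℕ} {A : Type} {S : Fin n → Type} [Fintype A] [∀ i, Fintype (S i)]

/-- In a DMC, two actions enabled at the same global state that share an agent are equal. -/
lemma enabledA_eq_of_mem_loc {P : PAS n A S} (hP : P.isDMC) {s : ∀ i, S i} {a b : A}
    (ha : P.enabledA a s) (hb : P.enabledA b s) {i : Fin n}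
    (hia : i ∈ P.loc a) (hib : i ∈ P.loc b) : a = b :=
  (hP i (s i)).unique ⟨hia, _, ha, rfl⟩ ⟨hib, _, hb, rfl⟩

lemma Event.enabledA_act {P : PAS n A S} {e : P.Event} {s : ∀ i, S i} (h : e.enabled s) :
    P.enabledA e.act s := by
  have h' : P.projA e.act s = e.src := h
  rw [enabledA, h']
  exact e.src_en

lemma indep_of_act_ne {P : PAS n A S} (hP : P.isDMC) {s : ∀ i, S i} {e e' : P.Event}
    (he : e.enabled s) (he' : e'.enabled s) (hne : e.act ≠ e'.act) : indep e e' := by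
  refine Finset.eq_empty_of_forall_notMem fun i hi => hne ?_
  rw [Finset.mem_inter] at hi
  exact enabledA_eq_of_mem_loc hP (Event.enabledA_act he) (Event.enabledA_act he') hi.1 hi.2

lemma exists_prob_pos {P : PAS n A S} {s : ∀ i, S i} {a : A} (ha : P.enabledA a s) :
    ∃ v, 0 < P.prob a (P.projA a s) v := by
  by_contra! h
  have h0 := Finset.sum_nonpos fun v (_ : v ∈ Finset.univ) => h v
  rw [P.prob_sum a _ ha] at h0
  linarith

lemma exists_enabledA {P : PAS n A S} {s : ∀ i, S i} (hs : ¬ P.isDeadlock s) :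
    ∃ a, P.enabledA a s := by
  obtain ⟨e, he⟩ := not_not.mp hs
  exact ⟨e.act, Event.enabledA_act he⟩

/-- In a DMC, a maximal step contains an event of every enabled action. -/
lemma isMaxStep.exists_act_eq {P : PAS n A S} (hP : P.isDMC) {s : ∀ i, S i} {u : Set P.Event}
    (hu : P.isMaxStep u s) {a : A} (ha : P.enabledA a s) : ∃ e ∈ u, e.act = a := by
  by_contra! h
  obtain ⟨v, hv⟩ := exists_prob_pos ha
  obtain ⟨⟨hfin, -, hen, hind⟩, hmax⟩ := hu
  let e₀ : P.Event := ⟨a, P.projA a s, v, ha, hv⟩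
  have he₀ : e₀.enabled s := rfl
  refine hmax e₀ (fun hmem => h e₀ hmem rfl)
    ⟨hfin.insert e₀, Set.insert_nonempty _ _, ?_, ?_⟩
  · rintro e (rfl | he)
    exacts [he₀, hen e he]
  · rintro e (rfl | he) e' (rfl | he') hne
    · exact absurd rfl hne
    · exact indep_of_act_ne hP he₀ (hen e' he') (h e' he').symm
    · exact indep_of_act_ne hP (hen e he) he₀ (h e he)
    · exact hind e he e' he' hne

/-- The event of the enabled action `a` leading from `s` to the `a`-part of `s'`. -/
def eventTo (P : PAS n A S) (s s' : ∀ i, S i)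
    (h : ∀ a : {a // P.enabledA a s}, 0 < P.prob a (P.projA a s) (P.projA a s'))
    (a : {a // P.enabledA a s}) : P.Event :=
  ⟨a, P.projA a s, P.projA a s', a.2, h a⟩

lemma eventTo_injective (P : PAS n A S) (s s' : ∀ i, S i)
    (h : ∀ a : {a // P.enabledA a s}, 0 < P.prob a (P.projA a s) (P.projA a s')) :
    Function.Injective (P.eventTo s s' h) := fun _ _ hab =>
  Subtype.ext (congrArg Event.act hab)

lemma isMaxStep_range_eventTo {P : PAS n A S} (hP : P.isDMC) {s : ∀ i, S i}
    (hs : ¬ P.isDeadlock s) (s' : ∀ i, S i)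
    (h : ∀ a : {a // P.enabledA a s}, 0 < P.prob a (P.projA a s) (P.projA a s')) :
    P.isMaxStep (Set.range (P.eventTo s s' h)) s := by
  obtain ⟨a₀, ha₀⟩ := exists_enabledA hs
  refine ⟨⟨Set.finite_range _, ⟨_, ⟨a₀, ha₀⟩, rfl⟩, ?_, ?_⟩, ?_⟩
  · rintro _ ⟨a, rfl⟩
    exact rfl
  · rintro _ ⟨a, rfl⟩ _ ⟨b, rfl⟩ hne
    refine indep_of_act_ne (s := s) hP rfl rfl fun hab => hne ?_
    rw [Subtype.ext (a1 := a) (a2 := b) hab]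
  · rintro e he ⟨-, -, hen, hind⟩
    have hact := Event.enabledA_act (hen e (Set.mem_insert _ _))
    have hmem : P.eventTo s s' h ⟨e.act, hact⟩ ∈ Set.range (P.eventTo s s' h) := ⟨_, rfl⟩
    have hdisj : P.loc e.act ∩ P.loc e.act = ∅ :=
      hind e (Set.mem_insert _ _) (P.eventTo s s' h ⟨e.act, hact⟩)
        (Set.mem_insert_of_mem _ hmem) fun heq => he ⟨_, heq.symm⟩
    rw [Finset.inter_self] at hdisj
    exact (P.loc_nonempty e.act).ne_empty hdisj

/-- `s'` agrees with `s` on all agents outside the locations of the actions enabled at `s`. -/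
def agreesOff (P : PAS n A S) (s s' : ∀ i, S i) : Prop :=
  ∀ j, (∀ a, P.enabledA a s → j ∉ P.loc a) → s' j = s j

lemma uSucc_range_eventTo {P : PAS n A S} {s s' : ∀ i, S i} (hoff : P.agreesOff s s')
    (h : ∀ a : {a // P.enabledA a s}, 0 < P.prob a (P.projA a s) (P.projA a s')) :
    P.uSucc (Set.range (P.eventTo s s' h)) s s' := by
  refine ⟨?_, fun j hj => hoff j fun a ha hja => hj ?_⟩
  · rintro _ ⟨a, rfl⟩ i
    rfl
  · exact Set.mem_biUnion (x := P.eventTo s s' h ⟨a, ha⟩) ⟨_, rfl⟩ hja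

lemma isSuccessor.agreesOff {P : PAS n A S} {s s' : ∀ i, S i} (h : P.isSuccessor s s') :
    P.agreesOff s s' := by
  obtain ⟨u, hu, hus⟩ := h
  refine fun j hj => hus.2 j fun hmem => ?_
  obtain ⟨e, he, hje⟩ := Set.mem_iUnion₂.mp hmem
  exact hj e.act (Event.enabledA_act (hu.1.2.2.1 e he)) hje

lemma isSuccessor.prob_pos {P : PAS n A S} (hP : P.isDMC) {s s' : ∀ i, S i}
    (h : P.isSuccessor s s') (a : {a // P.enabledA a s}) :
    0 < P.prob a (P.projA a s) (P.projA a s') := by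
  obtain ⟨u, hu, hus⟩ := h
  obtain ⟨a, ha⟩ := a
  obtain ⟨e, he, rfl⟩ := hu.exists_act_eq hP ha
  have hsrc : P.projA e.act s = e.src := hu.1.2.2.1 e he
  have htgt : P.projA e.act s' = e.tgt := funext (hus.1 e he)
  simpa only [hsrc, htgt] using e.prob_pos

open Classical in
/-- The family of `a`-states, over the actions enabled at `s`, determines the global state
that agrees with `s` elsewhere; summing over such states factors over the enabled actions. -/
lemma sum_agreesOff_prod {P : PAS n A S} (hP : P.isDMC) (s : ∀ i, S i)
    (f : ∀ a : {a // P.enabledA a s}, (∀ i : {j // j ∈ P.loc a}, S i.1) → ℝ) :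
    ∑ s' with P.agreesOff s s', ∏ a, f a (P.projA a s') = ∏ a, ∑ v, f a v := by
  rw [Fintype.prod_sum]
  refine Finset.sum_bij (fun s' _ a => P.projA a s') (fun _ _ => Finset.mem_univ _) ?_ ?_
    fun _ _ => rfl
  · intro s₁ h₁ s₂ h₂ heq
    rw [Finset.mem_filter] at h₁ h₂
    funext j
    by_cases hj : ∃ a, P.enabledA a s ∧ j ∈ P.loc a
    · obtain ⟨a, ha, hja⟩ := hj
      exact congrFun (congrFun heq ⟨a, ha⟩) ⟨j, hja⟩
    · push Not at hj
      rw [h₁.2 j hj, h₂.2 j hj]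
  · intro w _
    refine ⟨fun j => if h : ∃ a : {a // P.enabledA a s}, j ∈ P.loc a then
      w h.choose ⟨j, h.choose_spec⟩ else s j, ?_, ?_⟩
    · refine Finset.mem_filter.mpr ⟨Finset.mem_univ _, fun j hj => dif_neg ?_⟩
      rintro ⟨a, hja⟩
      exact hj a a.2 hja
    · funext a ⟨j, hja⟩
      have h : ∃ a : {a // P.enabledA a s}, j ∈ P.loc a := ⟨a, hja⟩
      have key : ∀ b : {a // P.enabledA a s}, ∀ hjb : j ∈ P.loc b, w b ⟨j, hjb⟩ = w a ⟨j, hja⟩ := by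
        intro b hjb
        obtain rfl : b = a := Subtype.ext (enabledA_eq_of_mem_loc hP b.2 a.2 hjb hja)
        rfl
      exact (dif_pos h).trans (key _ _)

theorem stmt8 (P : PAS n A S) (hP : P.isDMC)
    (M : (∀ i, S i) → (∀ i, S i) → ℝ)
    (hdead : ∀ s : ∀ i, S i, P.isDeadlock s →
      M s s = 1 ∧ ∀ s' : ∀ i, S i, s' ≠ s → M s s' = 0)
    (hstep : ∀ (s s' : ∀ i, S i) (u : Set P.Event), ¬ P.isDeadlock s →
      P.isMaxStep u s → P.uSucc u s s' → M s s' = ∏ᶠ e ∈ u, Event.p e)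
    (hnone : ∀ s s' : ∀ i, S i, ¬ P.isDeadlock s → ¬ P.isSuccessor s s' →
      M s s' = 0) :
    ∀ s : ∀ i, S i, ∑ s' : ∀ i, S i, M s s' = 1 := by
  classical
  intro s
  by_cases hs : P.isDeadlock s
  · rw [Finset.sum_eq_single s (fun s' _ hne => (hdead s hs).2 s' hne)
      fun h => absurd (Finset.mem_univ s) h]
    exact (hdead s hs).1
  have hM : ∀ s', M s s' = if P.agreesOff s s' then
      ∏ a : {a // P.enabledA a s}, P.prob a (P.projA a s) (P.projA a s') else 0 := by
    intro s'
    split_ifs with hoff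
    · by_cases h : ∀ a : {a // P.enabledA a s}, 0 < P.prob a (P.projA a s) (P.projA a s')
      · rw [hstep s s' _ hs (isMaxStep_range_eventTo hP hs s' h) (uSucc_range_eventTo hoff h),
          finprod_mem_range (P.eventTo_injective s s' h), finprod_eq_prod_of_fintype]
        rfl
      · rw [hnone s s' hs fun hsucc => h (hsucc.prob_pos hP)]
        push Not at h
        obtain ⟨a, ha⟩ := h
        exact (Finset.prod_eq_zero (Finset.mem_univ a)
          (le_antisymm ha (P.prob_nonneg a _ _ a.2))).symm
    · exact hnone s s' hs fun hsucc => hoff hsucc.agreesOff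
  simp_rw [hM]
  rw [← Finset.sum_filter,
    sum_agreesOff_prod hP s fun a v => P.prob a (P.projA a s) v]
  exact Finset.prod_eq_one fun a _ => P.prob_sum a _ a.2

end PAS
end
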